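/- Fix x ∈ ℚ and a cyclic order y₀ ∈ CO_4 with successor permutation τ₀. Define a profile p on ROLO ballots by: p(b) = 1 if b = (a, τ₀⁻¹(a), τ₀(a)) for some a ∈ Fin 4 (the four ballots fully matching y₀); p(b) = −1 if b = (a, τ₀(a), τ₀⁻¹(a)) for some a ∈ Fin 4 (the four ballots fully matching the reversal of y₀); and p(b) = 0 otherwise. Then for every cyclic order y ∈ CO_4, the total score Σ_b p(b)·s_x(b, y) equals 4x if y = y₀, equals −4x if y is the reversal of y₀, and equals 0 otherwise. -/

import Mathlib

/-- The set of cyclic orders on `Fin n`: the left cosets of the cyclic subgroup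
generated by the natural `n`-cycle `i ↦ i + 1` in the symmetric group. -/
abbrev CO (n : ℕ) := Equiv.Perm (Fin n) ⧸ Subgroup.zpowers (finRotate n)

/-- A ROLO ballot: a triple `(a, r, l)` of pairwise distinct elements of `Fin 4`
(`r` immediately to the right of `a`, `l` immediately to the left of `a`). -/
abbrev Ballot :=
  {t : Fin 4 × Fin 4 × Fin 4 // t.1 ≠ t.2.1 ∧ t.1 ≠ t.2.2 ∧ t.2.1 ≠ t.2.2}

/-- The successor permutation of a cyclic order `gH` is `g * c * g⁻¹`. -/
def succPerm (x : CO 4) : Equiv.Perm (Fin 4) :=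
  Quotient.liftOn' x (fun g => g * finRotate 4 * g⁻¹) (by
    intro g g' hgg'
    rw [QuotientGroup.leftRel_apply] at hgg'
    obtain ⟨k, hk⟩ := hgg'
    simp only at hk ⊢
    have h1 : g' = g * finRotate 4 ^ k := by rw [hk, mul_inv_cancel_left]
    subst h1
    have hc : Commute (finRotate 4 ^ k) (finRotate 4) :=
      (Commute.refl (finRotate 4)).zpow_left k
    have key : (finRotate 4 ^ k) * finRotate 4 * (finRotate 4 ^ k)⁻¹ = finRotate 4 := by
      rw [hc.eq, mul_inv_cancel_right]
    calc g * finRotate 4 * g⁻¹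
        = g * ((finRotate 4 ^ k) * finRotate 4 * (finRotate 4 ^ k)⁻¹) * g⁻¹ := by rw [key]
      _ = g * finRotate 4 ^ k * finRotate 4 * (g * finRotate 4 ^ k)⁻¹ := by group)

/-- The ROLO(x,1) score of a ballot `(a, r, l)` against a cyclic order with
successor permutation `τ`: `x` points if both `τ a = l` and `τ r = a` hold,
`1` point if exactly one of them holds, and `0` points otherwise. -/
def score (x : ℚ) (τ : Equiv.Perm (Fin 4)) (t : Fin 4 × Fin 4 × Fin 4) : ℚ :=
  if τ t.1 = t.2.2 ∧ τ t.2.1 = t.1 then x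
  else if τ t.1 = t.2.2 ∨ τ t.2.1 = t.1 then 1
  else 0

/-!
Let `M(σ, τ)` be the score that `τ` receives from the four ballots fully matching `σ`. The total
score of `y` is `M(τ₀, τ) - M(τ₀⁻¹, τ)`. Relabelling the candidates and reversing all orders give
`M(gσg⁻¹, gτg⁻¹) = M(σ, τ) = M(σ⁻¹, τ⁻¹)`. If the 4-cycle `τ` is neither `τ₀` nor `τ₀⁻¹`, then
`τ₀²` conjugates `τ` to `τ⁻¹` while fixing `τ₀`, whence `M(τ₀, τ) = M(τ₀, τ⁻¹) = M(τ₀⁻¹, τ)`. In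
the two remaining cases one of the terms is `4x` and the other vanishes.
-/

open Equiv.Perm

section FullCycles

variable {α : Type*} {f g : Equiv.Perm α}

theorem mem_zpowers_of_commute_of_sameCycle (hf : ∀ a b, f.SameCycle a b) (hgf : Commute g f) :
    g ∈ Subgroup.zpowers f := by
  cases isEmpty_or_nonempty α with
  | inl _ => exact Subsingleton.elim 1 g ▸ one_mem _
  | inr hα =>
    obtain ⟨a⟩ := hα
    obtain ⟨k, hk⟩ := hf a (g a)
    refine ⟨k, Equiv.ext fun b => ?_⟩
    obtain ⟨j, rfl⟩ := hf a b
    calc (f ^ k) ((f ^ j) a) = (f ^ j) ((f ^ k) a) := zpow_apply_comm f k j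
      _ = (f ^ j) (g a) := by rw [hk]
      _ = g ((f ^ j) a) := (DFunLike.congr_fun (hgf.zpow_right j).eq a).symm

theorem sameCycle_finRotate {n : ℕ} (a b : Fin (n + 2)) : (finRotate (n + 2)).SameCycle a b :=
  have finRotate_ne_self (i : Fin (n + 2)) : finRotate (n + 2) i ≠ i := by
    simp only [← mem_support, support_finRotate, Finset.mem_univ]
  isCycle_finRotate.sameCycle (finRotate_ne_self a) (finRotate_ne_self b)

end FullCycles

section FourCycles

variable {σ τ : Equiv.Perm (Fin 4)}

theorem apply_apply_ne_self_of_isConj_finRotate (hτ : IsConj (finRotate 4) τ) (a : Fin 4) :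
    τ (τ a) ≠ a := by
  obtain ⟨g, rfl⟩ := isConj_iff.mp hτ
  have finRotate_finRotate_ne : ∀ i, finRotate 4 (finRotate 4 i) ≠ i := by decide
  simpa [← eq_inv_iff_eq] using finRotate_finRotate_ne (g⁻¹ a)

theorem semiconjBy_sq_inv_of_isConj_finRotate (hσ : IsConj (finRotate 4) σ)
    (hτ : IsConj (finRotate 4) τ) (hne : τ ≠ σ) (hne_inv : τ ≠ σ⁻¹) :
    SemiconjBy (σ ^ 2) τ τ⁻¹ := by
  -- Why the check succeeds: `σ ^ 2 ≠ τ ^ 2` lie in the Klein four-group, and conjugation by `τ`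
  -- swaps `σ ^ 2` with `τ ^ 2 * σ ^ 2`, so `τ * σ ^ 2 * τ = τ ^ 2 * σ ^ 2 * τ ^ 2 = σ ^ 2`.
  have semiconjBy_finRotate : ∀ k : Equiv.Perm (Fin 4),
      k * finRotate 4 * k⁻¹ ≠ finRotate 4 → k * finRotate 4 * k⁻¹ ≠ (finRotate 4)⁻¹ →
      finRotate 4 ^ 2 * (k * finRotate 4 * k⁻¹) =
        (k * finRotate 4 * k⁻¹)⁻¹ * finRotate 4 ^ 2 := by
    decide +kernel
  obtain ⟨g, rfl⟩ := isConj_iff.mp hσ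
  obtain ⟨ρ, rfl⟩ : ∃ ρ, g * ρ * g⁻¹ = τ := ⟨g⁻¹ * τ * g, by group⟩
  obtain ⟨k, rfl⟩ := isConj_iff.mp (hτ.trans (isConj_iff.mpr ⟨g⁻¹, by group⟩ : IsConj _ ρ))
  rw [conj_pow, conj_inv, SemiconjBy.conj_iff]
  refine semiconjBy_finRotate k (fun h => hne (by rw [h])) (fun h => hne_inv ?_)
  rw [h, conj_inv]

end FourCycles

section SuccPerm

theorem isConj_finRotate_succPerm (y : CO 4) : IsConj (finRotate 4) (succPerm y) := by
  induction y using Quotient.inductionOn' with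
  | h g => exact isConj_iff.mpr ⟨g, rfl⟩

theorem succPerm_injective : Function.Injective succPerm := by
  intro y z hyz
  induction y using Quotient.inductionOn' with
  | h g =>
  induction z using Quotient.inductionOn' with
  | h k =>
  change g * finRotate 4 * g⁻¹ = k * finRotate 4 * k⁻¹ at hyz
  have commute_finRotate : Commute (g⁻¹ * k) (finRotate 4) :=
    calc g⁻¹ * k * finRotate 4 = g⁻¹ * (k * finRotate 4 * k⁻¹) * k := by group
      _ = g⁻¹ * (g * finRotate 4 * g⁻¹) * k := by rw [hyz]
      _ = finRotate 4 * (g⁻¹ * k) := by group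
  exact QuotientGroup.eq.mpr
    (mem_zpowers_of_commute_of_sameCycle sameCycle_finRotate commute_finRotate)

end SuccPerm

section Score

variable (x : ℚ) (g σ τ : Equiv.Perm (Fin 4))

theorem score_conj (a r l : Fin 4) :
    score x (g * τ * g⁻¹) (g a, g r, g l) = score x τ (a, r, l) := by
  simp [score]

theorem score_inv (a r l : Fin 4) : score x τ⁻¹ (a, r, l) = score x τ (a, l, r) := by
  simp only [score, inv_eq_iff_eq, eq_comm (a := a), eq_comm (a := r), and_comm, or_comm]

/-- The total score that the cyclic order with successor permutation `τ` receives when each of the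
four ballots `(a, σ⁻¹ a, σ a)`, those fully matching `σ`, is cast once. -/
def matchingScore : ℚ :=
  ∑ a, score x τ (a, σ⁻¹ a, σ a)

theorem matchingScore_conj :
    matchingScore x (g * σ * g⁻¹) (g * τ * g⁻¹) = matchingScore x σ τ := by
  unfold matchingScore
  rw [← Equiv.sum_comp g]
  refine Finset.sum_congr rfl fun a _ => ?_
  rw [← score_conj x g τ]
  simp [mul_inv_rev]

theorem matchingScore_inv_inv : matchingScore x σ⁻¹ τ⁻¹ = matchingScore x σ τ := by
  simp only [matchingScore, score_inv, inv_inv]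

theorem matchingScore_self : matchingScore x τ τ = 4 * x := by
  simp [matchingScore, score]

variable {σ τ}

theorem matchingScore_inv_self (hτ : ∀ a, τ (τ a) ≠ a) : matchingScore x τ⁻¹ τ = 0 := by
  have apply_ne_inv (a : Fin 4) : τ a ≠ τ⁻¹ a := by simpa only [ne_eq, eq_inv_iff_eq] using hτ a
  simp only [matchingScore, score, inv_inv, apply_ne_inv, hτ, or_self, and_self, if_false,
    Finset.sum_const_zero]

theorem matchingScore_inv_left_of_semiconjBy (hσ : Commute g σ) (hτ : SemiconjBy g τ τ⁻¹) :
    matchingScore x σ⁻¹ τ = matchingScore x σ τ :=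
  calc matchingScore x σ⁻¹ τ = matchingScore x σ τ⁻¹ := by
        rw [← matchingScore_inv_inv, inv_inv]
    _ = matchingScore x (g * σ * g⁻¹) (g * τ * g⁻¹) := by
        rw [hσ.mul_inv_cancel, hτ.eq, mul_inv_cancel_right]
    _ = matchingScore x σ τ := matchingScore_conj x g σ τ

end Score

section MatchingBallots

variable {σ : Equiv.Perm (Fin 4)}

/-- The ballot `b` fully matches the cyclic order with successor permutation `σ`: its right and left
neighbours of `a` are the predecessor and the successor of `a`. -/
def FullyMatches (σ : Equiv.Perm (Fin 4)) (b : Ballot) : Prop :=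
  ∃ a, (b : Fin 4 × Fin 4 × Fin 4) = (a, σ⁻¹ a, σ a)

theorem FullyMatches.not_inv {b : Ballot} (hb : FullyMatches σ b) : ¬ FullyMatches σ⁻¹ b := by
  rintro ⟨a', ha'⟩
  obtain ⟨a, ha⟩ := hb
  have same_base : a = a' := congrArg (·.1) (ha.symm.trans ha')
  have right_eq_left : b.1.2.1 = b.1.2.2 :=
    calc b.1.2.1 = σ⁻¹ a := congrArg (·.2.1) ha
      _ = σ⁻¹ a' := by rw [same_base]
      _ = b.1.2.2 := (congrArg (·.2.2) ha').symm
  exact b.2.2.2 right_eq_left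

open Classical in
theorem sum_ite_fullyMatches {M : Type*} [AddCommMonoid M] (hσ : ∀ a, σ (σ a) ≠ a)
    (f : Fin 4 × Fin 4 × Fin 4 → M) :
    ∑ b : Ballot, (if FullyMatches σ b then f b else 0) = ∑ a, f (a, σ⁻¹ a, σ a) := by
  have ne_apply (a : Fin 4) : a ≠ σ a := fun h => hσ a (by rw [← h, ← h])
  have ne_inv (a : Fin 4) : a ≠ σ⁻¹ a := fun h => ne_apply a (eq_inv_iff_eq.mp h).symm
  have inv_ne_apply (a : Fin 4) : σ⁻¹ a ≠ σ a := fun h => hσ a (inv_eq_iff_eq.mp h).symm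
  let matchingBallot (a : Fin 4) : Ballot :=
    ⟨(a, σ⁻¹ a, σ a), ne_inv a, ne_apply a, inv_ne_apply a⟩
  symm
  refine Fintype.sum_of_injective matchingBallot (fun a a' h => congrArg (·.1.1) h) _ _
    (fun b hb => if_neg ?_) (fun a => (if_pos ⟨a, rfl⟩).symm)
  rintro ⟨a, ha⟩
  exact hb ⟨a, Subtype.ext ha.symm⟩

theorem sum_profile_mul_eq_sub {R : Type*} [Ring R] (hσ : ∀ a, σ (σ a) ≠ a)
    {p : Ballot → R} (hp_one : ∀ b, FullyMatches σ b → p b = 1)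
    (hp_neg_one : ∀ b, FullyMatches σ⁻¹ b → p b = -1)
    (hp_zero : ∀ b, ¬ FullyMatches σ b → ¬ FullyMatches σ⁻¹ b → p b = 0)
    (f : Fin 4 × Fin 4 × Fin 4 → R) :
    ∑ b : Ballot, p b * f b = ∑ a, f (a, σ⁻¹ a, σ a) - ∑ a, f (a, σ a, σ⁻¹ a) := by
  classical
  have hσ_inv (a : Fin 4) : σ⁻¹ (σ⁻¹ a) ≠ a := by
    simpa only [ne_eq, inv_eq_iff_eq, eq_comm (a := a)] using hσ a
  have sum_inv : ∑ b : Ballot, (if FullyMatches σ⁻¹ b then f b else 0) =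
      ∑ a, f (a, σ a, σ⁻¹ a) := sum_ite_fullyMatches hσ_inv f
  rw [← sum_ite_fullyMatches hσ, ← sum_inv, ← Finset.sum_sub_distrib]
  refine Finset.sum_congr rfl fun b _ => ?_
  by_cases hb : FullyMatches σ b
  · simp [hb, hb.not_inv, hp_one b hb]
  · by_cases hb_inv : FullyMatches σ⁻¹ b
    · simp [hb, hb_inv, hp_neg_one b hb_inv]
    · simp [hb, hb_inv, hp_zero b hb hb_inv]

end MatchingBallots

theorem stmt_18 (x : ℚ) (y₀ : CO 4) (p : Ballot → ℚ)
    (hp1 : ∀ b : Ballot,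
      (∃ a : Fin 4, (b : Fin 4 × Fin 4 × Fin 4) = (a, (succPerm y₀)⁻¹ a, succPerm y₀ a)) →
      p b = 1)
    (hp2 : ∀ b : Ballot,
      (∃ a : Fin 4, (b : Fin 4 × Fin 4 × Fin 4) = (a, succPerm y₀ a, (succPerm y₀)⁻¹ a)) →
      p b = -1)
    (hp0 : ∀ b : Ballot,
      (¬ ∃ a : Fin 4, (b : Fin 4 × Fin 4 × Fin 4) = (a, (succPerm y₀)⁻¹ a, succPerm y₀ a)) →
      (¬ ∃ a : Fin 4, (b : Fin 4 × Fin 4 × Fin 4) = (a, succPerm y₀ a, (succPerm y₀)⁻¹ a)) →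
      p b = 0)
    (y : CO 4) :
    (y = y₀ →
      ∑ b : Ballot, p b * score x (succPerm y) (b : Fin 4 × Fin 4 × Fin 4) = 4 * x) ∧
    (succPerm y = (succPerm y₀)⁻¹ →
      ∑ b : Ballot, p b * score x (succPerm y) (b : Fin 4 × Fin 4 × Fin 4) = -(4 * x)) ∧
    (y ≠ y₀ → succPerm y ≠ (succPerm y₀)⁻¹ →
      ∑ b : Ballot, p b * score x (succPerm y) (b : Fin 4 × Fin 4 × Fin 4) = 0) := by
  set τ₀ := succPerm y₀
  set τ := succPerm y
  have hτ₀ : IsConj (finRotate 4) τ₀ := isConj_finRotate_succPerm y₀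
  have τ₀_sq_ne := apply_apply_ne_self_of_isConj_finRotate hτ₀
  have total_score : ∑ b : Ballot, p b * score x τ b =
      matchingScore x τ₀ τ - matchingScore x τ₀⁻¹ τ :=
    sum_profile_mul_eq_sub τ₀_sq_ne hp1 hp2 hp0 (score x τ)
  rw [total_score]
  refine ⟨fun hy => ?_, fun hτ => ?_, fun hy hτ => ?_⟩
  · have hτ : τ = τ₀ := congrArg succPerm hy
    rw [hτ, matchingScore_self, matchingScore_inv_self x τ₀_sq_ne, sub_zero]
  · rw [hτ, matchingScore_self, ← matchingScore_inv_inv, inv_inv,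
      matchingScore_inv_self x τ₀_sq_ne, zero_sub]
  · have sq_inverts : SemiconjBy (τ₀ ^ 2) τ τ⁻¹ :=
      semiconjBy_sq_inv_of_isConj_finRotate hτ₀ (isConj_finRotate_succPerm y)
        (succPerm_injective.ne hy) hτ
    rw [matchingScore_inv_left_of_semiconjBy x _ (Commute.pow_self τ₀ 2) sq_inverts, sub_self]
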